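/- Let 𝓕 be a class of Markov kernels from ℝ^d to ℝ^p and 𝓗 a class of Markov kernels from ℝ^p to ℝ^q; the composed class 𝓗∘𝓕 consists of the kernels x ↦ (κ_F(x)).bind κ_H for κ_F∈𝓕, κ_H∈𝓗. For a family Γ of probability measures on ℝ^d, define N_U(ε, 𝓕, m, d_TV^∞, Γ) as the supremum over m-tuples (μ₁,…,μ_m) from Γ of the least cardinality of a set C ⊆ 𝓕 such that every κ∈𝓕 has κ̂∈C with max_{k≤m} d_TV(μ_k.bind κ, μ_k.bind κ̂) ≤ ε; define N_U with d_TV^{ℓ2} analogously using sqrt((1/m)·Σ_k d_TV(·,·)²). Let X̄_d denote all probability measures on ℝ^d and Δ_d the Dirac measures on ℝ^d. For every ε,ε'>0 and m∈ℕ, whenever the right-hand quantities are finite: (i) N_U(ε+ε', 𝓗∘𝓕, m, d_TV^∞, X̄_d) ≤ N_U(ε', 𝓗, m·N₁, d_TV^∞, X̄_p) · N₁ where N₁ = N_U(ε, 𝓕, m, d_TV^∞, X̄_d); (ii) N_U(ε+ε', 𝓗∘𝓕, m, d_TV^∞, Δ_d) ≤ N_U(ε', 𝓗, m·N₂, d_TV^∞,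 X̄_p) · N₂ where N₂ = N_U(ε, 𝓕, m, d_TV^∞, Δ_d); (iii) N_U(ε+ε', 𝓗∘𝓕, m, d_TV^{ℓ2}, Δ_d) ≤ N_U(ε', 𝓗, m·N₃, d_TV^∞, X̄_p) · N₃ where N₃ = N_U(ε, 𝓕, m, d_TV^{ℓ2}, Δ_d). -/

import Mathlib

/-!
Take an `ε`-cover `c₁, …, c_N` of `F` on the sample `μ₁, …, μ_m`, and then an `ε'`-cover `C'` of `H`
on the `m * N` probability measures `μ_k.bind c_i`. The kernels `x ↦ (c_i x).bind κ'` with `κ' ∈ C'`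
form an `(ε + ε')`-cover of the composed class. Indeed, if `c_i` is close to `κF` and `κ'` is close
to `κH`, then
`d(μ_k.bind κF.bind κH, μ_k.bind c_i.bind κ')`
`≤ d(μ_k.bind κF.bind κH, μ_k.bind c_i.bind κH) + d(μ_k.bind c_i.bind κH, μ_k.bind c_i.bind κ')`,
where the first term is at most `d(μ_k.bind κF, μ_k.bind c_i)` by the data processing inequality
`dTV_bind_le` (a consequence of the layer cake formula), and the second is at most `ε'` for every
`k`. Aggregating over `k` uses only monotonicity of the maximum, or Cauchy-Schwarz for the `ℓ2`
metric.
-/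

open MeasureTheory Real

/-- Total variation distance between two measures. -/
noncomputable def dTV {α : Type*} [MeasurableSpace α] (μ ν : Measure α) : ℝ :=
  ⨆ A : {A : Set α // MeasurableSet A}, |(μ A).toReal - (ν A).toReal|

/-- The `∞`-extended TV metric on `m`-tuples of measures. -/
noncomputable def dTVInf {β : Type*} [MeasurableSpace β] (m : ℕ)
    (u v : Fin m → Measure β) : ℝ :=
  ⨆ k, dTV (u k) (v k)

/-- The `ℓ2`-extended TV metric on `m`-tuples of measures. -/
noncomputable def dTVL2 {β : Type*} [MeasurableSpace β] (m : ℕ)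
    (u v : Fin m → Measure β) : ℝ :=
  Real.sqrt ((1 / (m : ℝ)) * ∑ k, (dTV (u k) (v k)) ^ 2)

/-- Uniform covering number of a class `F` of kernels from `α` to `β` on samples of `m`
random inputs from a family `Γ` of measures on `α`, w.r.t. an extended metric `D` on
`m`-tuples of output measures, at scale `ε`: the supremum over samples `(μ₁,…,μ_m)` from
`Γ` of the least cardinality of a `C ⊆ F` such that every `κ ∈ F` has `κ' ∈ C` with
`D (μ_k.bind κ)_k (μ_k.bind κ')_k ≤ ε`. -/
noncomputable def kCoverNum {α β : Type*} [MeasurableSpace α] [MeasurableSpace β]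
    (F : Set (α → Measure β)) (m : ℕ) (Γ : Set (Measure α))
    (D : (Fin m → Measure β) → (Fin m → Measure β) → ℝ) (ε : ℝ) : ℕ∞ :=
  ⨆ S : {S : Fin m → Measure α // ∀ k, S k ∈ Γ},
    sInf (Set.encard '' {C : Set (α → Measure β) | C ⊆ F ∧
      ∀ κ ∈ F, ∃ κ' ∈ C,
        D (fun k => (S.1 k).bind κ) (fun k => (S.1 k).bind κ') ≤ ε})

/-- All probability measures on `Fin d → ℝ`. -/
def probMeasures (d : ℕ) : Set (Measure (Fin d → ℝ)) :=
  {μ | IsProbabilityMeasure μ}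

/-- All Dirac measures on `Fin d → ℝ`. -/
def diracMeasures (d : ℕ) : Set (Measure (Fin d → ℝ)) :=
  {μ | ∃ x, μ = Measure.dirac x}

lemma dTV_nonneg {α : Type*} [MeasurableSpace α] (μ ν : Measure α) : 0 ≤ dTV μ ν :=
  Real.iSup_nonneg fun _ => abs_nonneg _

lemma bddAbove_dTV {α : Type*} [MeasurableSpace α] (μ ν : Measure α)
    [IsProbabilityMeasure μ] [IsProbabilityMeasure ν] :
    BddAbove (Set.range fun A : {A : Set α // MeasurableSet A} =>
      |(μ A).toReal - (ν A).toReal|) := by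
  refine ⟨1, ?_⟩
  rintro _ ⟨A, rfl⟩
  have h1 : (μ A).toReal ≤ 1 := measureReal_le_one (μ := μ)
  have h2 : (ν A).toReal ≤ 1 := measureReal_le_one (μ := ν)
  have h3 : 0 ≤ (μ A).toReal := ENNReal.toReal_nonneg
  have h4 : 0 ≤ (ν A).toReal := ENNReal.toReal_nonneg
  exact abs_le.2 ⟨by linarith, by linarith⟩

lemma abs_sub_le_dTV {α : Type*} [MeasurableSpace α] (μ ν : Measure α)
    [IsProbabilityMeasure μ] [IsProbabilityMeasure ν] {A : Set α} (hA : MeasurableSet A) :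
    |(μ A).toReal - (ν A).toReal| ≤ dTV μ ν :=
  le_ciSup (bddAbove_dTV μ ν) ⟨A, hA⟩

lemma dTV_triangle {α : Type*} [MeasurableSpace α] (μ ν ρ : Measure α)
    [IsProbabilityMeasure μ] [IsProbabilityMeasure ν] [IsProbabilityMeasure ρ] :
    dTV μ ρ ≤ dTV μ ν + dTV ν ρ := by
  refine Real.iSup_le (fun A => ?_) (add_nonneg (dTV_nonneg _ _) (dTV_nonneg _ _))
  exact (abs_sub_le _ _ _).trans
    (add_le_add (abs_sub_le_dTV μ ν A.2) (abs_sub_le_dTV ν ρ A.2))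

lemma dTV_self {α : Type*} [MeasurableSpace α] (μ : Measure α) : dTV μ μ = 0 := by
  simp [dTV]

/-- Expectations of a `[0, 1]`-valued function differ by at most the total variation distance: by
the layer cake formula they are averages over `t ∈ (0, 1]` of the probabilities of `{t ≤ f}`. -/
lemma abs_integral_sub_le_dTV {α : Type*} [MeasurableSpace α] (μ ν : Measure α)
    [IsProbabilityMeasure μ] [IsProbabilityMeasure ν] {f : α → ℝ} (hf : Measurable f)
    (h0 : ∀ x, 0 ≤ f x) (h1 : ∀ x, f x ≤ 1) :
    |∫ x, f x ∂μ - ∫ x, f x ∂ν| ≤ dTV μ ν := by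
  have hint : ∀ (ρ : Measure α) [IsProbabilityMeasure ρ], Integrable f ρ := fun ρ _ =>
    Integrable.of_bound hf.aestronglyMeasurable 1
      (Filter.Eventually.of_forall fun x => by
        rw [Real.norm_eq_abs, abs_of_nonneg (h0 x)]; exact h1 x)
  have lay : ∀ (ρ : Measure α) [IsProbabilityMeasure ρ],
      ∫ x, f x ∂ρ = ∫ t in Set.Ioc 0 1, ρ.real {a | t ≤ f a} := fun ρ _ =>
    (hint ρ).integral_eq_integral_Ioc_meas_le (Filter.Eventually.of_forall h0)
      (Filter.Eventually.of_forall h1)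
  have tail : ∀ (ρ : Measure α) [IsProbabilityMeasure ρ],
      IntegrableOn (fun t : ℝ => ρ.real {a | t ≤ f a}) (Set.Ioc 0 1) := by
    intro ρ _
    have anti : Antitone fun t : ℝ => ρ.real {a | t ≤ f a} := fun s t hst =>
      measureReal_mono (fun a (ha : t ≤ f a) => hst.trans ha)
    exact Integrable.of_bound anti.measurable.aestronglyMeasurable 1
      (Filter.Eventually.of_forall fun x => by
        rw [Real.norm_eq_abs, abs_of_nonneg measureReal_nonneg]; exact measureReal_le_one)
  rw [lay μ, lay ν, ← integral_sub (tail μ) (tail ν), ← Real.norm_eq_abs]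
  refine (norm_setIntegral_le_of_norm_le_const (C := dTV μ ν) (by simp) fun t _ => ?_).trans
    (by simp)
  exact abs_sub_le_dTV μ ν (measurableSet_le measurable_const hf)

lemma bind_toReal {α β : Type*} [MeasurableSpace α] [MeasurableSpace β] (μ : Measure α)
    {κ : α → Measure β} (hκ : Measurable κ) (hp : ∀ x, IsProbabilityMeasure (κ x))
    {A : Set β} (hA : MeasurableSet A) :
    (μ.bind κ A).toReal = ∫ x, (κ x A).toReal ∂μ := by
  rw [Measure.bind_apply hA hκ.aemeasurable, integral_toReal]
  · exact ((Measure.measurable_coe hA).comp hκ).aemeasurable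
  · exact Filter.Eventually.of_forall fun x => measure_lt_top _ _

lemma isProbabilityMeasure_bind' {α β : Type*} [MeasurableSpace α] [MeasurableSpace β]
    (μ : Measure α) [IsProbabilityMeasure μ] {κ : α → Measure β} (hκ : Measurable κ)
    (hp : ∀ x, IsProbabilityMeasure (κ x)) : IsProbabilityMeasure (μ.bind κ) := by
  constructor
  rw [Measure.bind_apply MeasurableSet.univ hκ.aemeasurable]
  simp

/-- The data processing inequality for total variation. -/
lemma dTV_bind_le {α β : Type*} [MeasurableSpace α] [MeasurableSpace β] (μ ν : Measure α)
    [IsProbabilityMeasure μ] [IsProbabilityMeasure ν] {κ : α → Measure β} (hκ : Measurable κ)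
    (hp : ∀ x, IsProbabilityMeasure (κ x)) : dTV (μ.bind κ) (ν.bind κ) ≤ dTV μ ν := by
  refine Real.iSup_le (fun A => ?_) (dTV_nonneg _ _)
  rw [bind_toReal μ hκ hp A.2, bind_toReal ν hκ hp A.2]
  exact abs_integral_sub_le_dTV μ ν ((Measure.measurable_coe A.2).comp hκ).ennreal_toReal
    (fun _ => ENNReal.toReal_nonneg) (fun x => measureReal_le_one (μ := κ x))

lemma dTV_le_dTVInf {β : Type*} [MeasurableSpace β] {m : ℕ} (u v : Fin m → Measure β)
    (k : Fin m) : dTV (u k) (v k) ≤ dTVInf m u v :=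
  le_ciSup (f := fun k => dTV (u k) (v k)) (Set.finite_range _).bddAbove k

lemma dTVInf_le_add {β γ : Type*} [MeasurableSpace β] [MeasurableSpace γ] {m : ℕ} {ε ε' : ℝ}
    (hε : 0 < ε) (hε' : 0 < ε') (u v : Fin m → Measure γ) (u' v' : Fin m → Measure β)
    (h : ∀ k, dTV (u k) (v k) ≤ dTV (u' k) (v' k) + ε') (hD : dTVInf m u' v' ≤ ε) :
    dTVInf m u v ≤ ε + ε' :=
  Real.iSup_le (fun k => (h k).trans (by linarith [dTV_le_dTVInf u' v' k])) (by positivity)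

lemma dTVL2_le_add {β γ : Type*} [MeasurableSpace β] [MeasurableSpace γ] {m : ℕ} {ε ε' : ℝ}
    (hε : 0 < ε) (hε' : 0 < ε') (u v : Fin m → Measure γ) (u' v' : Fin m → Measure β)
    (h : ∀ k, dTV (u k) (v k) ≤ dTV (u' k) (v' k) + ε') (hD : dTVL2 m u' v' ≤ ε) :
    dTVL2 m u v ≤ ε + ε' := by
  rcases Nat.eq_zero_or_pos m with rfl | hm
  · simp only [dTVL2, Finset.univ_eq_empty, Finset.sum_empty, mul_zero, Real.sqrt_zero]
    positivity
  have hm' : (0 : ℝ) < m := by exact_mod_cast hm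
  unfold dTVL2 at hD ⊢
  rw [Real.sqrt_le_left hε.le, one_div, inv_mul_le_iff₀ hm'] at hD
  rw [Real.sqrt_le_left (by positivity), one_div, inv_mul_le_iff₀ hm']
  have hsum : ∑ k, dTV (u' k) (v' k) ≤ m * ε := by
    have cs := sq_sum_le_card_mul_sum_sq (s := Finset.univ) (f := fun k => dTV (u' k) (v' k))
    simp only [Finset.card_univ, Fintype.card_fin] at cs
    refine (sq_le_sq₀ (Finset.sum_nonneg fun k _ => dTV_nonneg _ _) (by positivity)).1 ?_
    calc _ ≤ _ := cs
      _ ≤ m * (m * ε ^ 2) := by gcongr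
      _ = _ := by ring
  calc ∑ k, dTV (u k) (v k) ^ 2
      ≤ ∑ k, (dTV (u' k) (v' k) + ε') ^ 2 :=
        Finset.sum_le_sum fun k _ => pow_le_pow_left₀ (dTV_nonneg _ _) (h k) 2
    _ = ∑ k, dTV (u' k) (v' k) ^ 2 + 2 * ε' * ∑ k, dTV (u' k) (v' k) + m * ε' ^ 2 := by
        simp only [add_sq, Finset.sum_add_distrib, Finset.mul_sum, Finset.sum_const,
          Finset.card_univ, Fintype.card_fin, nsmul_eq_mul]
        congr 2
        exact Finset.sum_congr rfl fun k _ => by ring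
    _ ≤ m * ε ^ 2 + 2 * ε' * (m * ε) + m * ε' ^ 2 := by gcongr
    _ = _ := by ring

/-- On every sample, the uniform covering number bounds the size of some cover: since `hD` makes
`F` a cover of itself, the infimum in `kCoverNum` is attained. -/
lemma exists_cover {α β : Type*} [MeasurableSpace α] [MeasurableSpace β]
    (F : Set (α → Measure β)) (m : ℕ) (Γ : Set (Measure α))
    (D : (Fin m → Measure β) → (Fin m → Measure β) → ℝ) (ε : ℝ) (hD : ∀ u, D u u ≤ ε)
    (S : Fin m → Measure α) (hS : ∀ k, S k ∈ Γ) :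
    ∃ C ⊆ F, (∀ κ ∈ F, ∃ κ' ∈ C, D (fun k => (S k).bind κ) (fun k => (S k).bind κ') ≤ ε) ∧
      C.encard ≤ kCoverNum F m Γ D ε := by
  have hne : (Set.encard '' {C : Set (α → Measure β) | C ⊆ F ∧
      ∀ κ ∈ F, ∃ κ' ∈ C, D (fun k => (S k).bind κ) (fun k => (S k).bind κ') ≤ ε}).Nonempty :=
    ⟨_, F, ⟨subset_rfl, fun κ hκ => ⟨κ, hκ, hD _⟩⟩, rfl⟩
  obtain ⟨C, ⟨hCF, hC⟩, hcard⟩ := csInf_mem hne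
  refine ⟨C, hCF, hC, hcard.le.trans ?_⟩
  exact le_iSup (fun S : {S : Fin m → Measure α // ∀ k, S k ∈ Γ} =>
    sInf (Set.encard '' {C : Set (α → Measure β) | C ⊆ F ∧
      ∀ κ ∈ F, ∃ κ' ∈ C,
        D (fun k => (S.1 k).bind κ) (fun k => (S.1 k).bind κ') ≤ ε})) ⟨S, hS⟩

lemma kCoverNum_le {α β : Type*} [MeasurableSpace α] [MeasurableSpace β]
    {F : Set (α → Measure β)} {m : ℕ} {Γ : Set (Measure α)}
    {D : (Fin m → Measure β) → (Fin m → Measure β) → ℝ} {ε : ℝ} {B : ℕ∞}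
    (h : ∀ S : Fin m → Measure α, (∀ k, S k ∈ Γ) → ∃ C ⊆ F,
      (∀ κ ∈ F, ∃ κ' ∈ C, D (fun k => (S k).bind κ) (fun k => (S k).bind κ') ≤ ε) ∧
      C.encard ≤ B) : kCoverNum F m Γ D ε ≤ B := by
  refine iSup_le fun ⟨S, hS⟩ => ?_
  obtain ⟨C, hCF, hC, hB⟩ := h S hS
  exact le_trans (sInf_le ⟨C, ⟨hCF, hC⟩, rfl⟩) hB

/-- A nonempty set with at most `N` elements is the range of a family indexed by `Fin N`, with
repetitions allowed. -/
lemma exists_fin_enum {α : Type*} {C : Set α} (hne : C.Nonempty) {N : ℕ}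
    (hC : C.encard ≤ N) : ∃ c : Fin N → α, Set.range c = C := by
  have hfin : C.Finite := Set.finite_of_encard_le_coe hC
  have hcard : C.ncard ≤ N := by
    rw [← hfin.cast_ncard_eq] at hC; exact_mod_cast hC
  have := hfin.fintype
  have := hne.to_subtype
  obtain ⟨e⟩ : Nonempty (C ↪ Fin N) :=
    Function.Embedding.nonempty_of_card_le (by
      rwa [Fintype.card_fin, ← Nat.card_eq_fintype_card, Nat.card_coe_set_eq])
  refine ⟨fun i => (Function.invFun e i : C), Set.ext fun x => ⟨?_, fun hx => ?_⟩⟩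
  · rintro ⟨i, rfl⟩; exact Subtype.coe_prop _
  · exact ⟨e ⟨x, hx⟩, congrArg Subtype.val (Function.leftInverse_invFun e.injective _)⟩

/-- The composition bound for an arbitrary extended metric: the hypothesis `hD` says that `D` on
output tuples exceeds `D'` on intermediate tuples by at most `ε'` when each coordinate does. -/
lemma kCoverNum_comp_le {d p q : ℕ} {ε ε' : ℝ} (hε' : 0 < ε') {m : ℕ}
    {F : Set ((Fin d → ℝ) → Measure (Fin p → ℝ))}
    {H : Set ((Fin p → ℝ) → Measure (Fin q → ℝ))}
    (hFmeas : ∀ κ ∈ F, Measurable κ)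
    (hFprob : ∀ κ ∈ F, ∀ x, IsProbabilityMeasure (κ x))
    (hHmeas : ∀ κ ∈ H, Measurable κ)
    (hHprob : ∀ κ ∈ H, ∀ y, IsProbabilityMeasure (κ y))
    {Γ : Set (Measure (Fin d → ℝ))} (hΓ : ∀ μ ∈ Γ, IsProbabilityMeasure μ)
    (D' : (Fin m → Measure (Fin p → ℝ)) → (Fin m → Measure (Fin p → ℝ)) → ℝ)
    (D : (Fin m → Measure (Fin q → ℝ)) → (Fin m → Measure (Fin q → ℝ)) → ℝ)
    (hD' : ∀ u, D' u u ≤ ε)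
    (hD : ∀ u v u' v', (∀ k, dTV (u k) (v k) ≤ dTV (u' k) (v' k) + ε') → D' u' v' ≤ ε →
      D u v ≤ ε + ε')
    (N : ℕ) (hN : kCoverNum F m Γ D' ε = (N : ℕ∞)) :
    kCoverNum {κ | ∃ κF ∈ F, ∃ κH ∈ H, κ = fun x => (κF x).bind κH} m Γ D (ε + ε')
      ≤ kCoverNum H (m * N) (probMeasures p) (dTVInf (m * N)) ε' * N := by
  refine kCoverNum_le fun S hS => ?_
  -- the nonempty case needs a center with which to pad the `ε`-cover to exactly `N` elements
  rcases F.eq_empty_or_nonempty with rfl | ⟨κ₀, hκ₀⟩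
  · refine ⟨∅, Set.empty_subset _, ?_, by simp⟩
    rintro _ ⟨_, h, _⟩
    exact h.elim
  obtain ⟨C, hCF, hC, hCcard⟩ := exists_cover F m Γ D' ε hD' S hS
  rw [hN] at hCcard
  have hCne : C.Nonempty := let ⟨κ', h, _⟩ := hC κ₀ hκ₀; ⟨κ', h⟩
  obtain ⟨c, hc⟩ := exists_fin_enum hCne hCcard
  have hcF : ∀ i, c i ∈ F := fun i => hCF (hc ▸ Set.mem_range_self i)
  have hSp : ∀ k, IsProbabilityMeasure (S k) := fun k => hΓ _ (hS k)
  have hSF : ∀ k, ∀ κ ∈ F, IsProbabilityMeasure ((S k).bind κ) := fun k κ hκ =>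
    isProbabilityMeasure_bind' _ (hFmeas κ hκ) (hFprob κ hκ)
  let T : Fin (m * N) → Measure (Fin p → ℝ) := fun j =>
    (S (finProdFinEquiv.symm j).1).bind (c (finProdFinEquiv.symm j).2)
  obtain ⟨C', hCH, hC', hCcard'⟩ := exists_cover H (m * N) (probMeasures p) (dTVInf (m * N)) ε'
    (fun u => Real.iSup_le (fun k => (dTV_self _).le.trans hε'.le) hε'.le) T
    (fun j => hSF _ _ (hcF _))
  refine ⟨(fun P : ((Fin p → ℝ) → Measure (Fin q → ℝ)) × ((Fin d → ℝ) → Measure (Fin p → ℝ)) =>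
      fun x => (P.2 x).bind P.1) '' (C' ×ˢ C), ?_, ?_, ?_⟩
  · rintro _ ⟨⟨κH, κF⟩, ⟨hH, hF⟩, rfl⟩
    exact ⟨κF, hCF hF, κH, hCH hH, rfl⟩
  · rintro _ ⟨κF, hF, κH, hH, rfl⟩
    obtain ⟨κF', hF', hFd⟩ := hC κF hF
    obtain ⟨κH', hH', hHd⟩ := hC' κH hH
    refine ⟨_, ⟨⟨κH', κF'⟩, ⟨hH', hF'⟩, rfl⟩, ?_⟩
    refine hD _ _ _ _ (fun k => ?_) hFd
    obtain ⟨i, rfl⟩ : κF' ∈ Set.range c := hc ▸ hF'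
    have := hSF k _ hF
    have := hSF k _ (hcF i)
    have hmH := hHmeas κH hH
    have hmH' := hHmeas κH' (hCH hH')
    have := isProbabilityMeasure_bind' ((S k).bind κF) hmH (hHprob κH hH)
    have := isProbabilityMeasure_bind' ((S k).bind (c i)) hmH (hHprob κH hH)
    have := isProbabilityMeasure_bind' ((S k).bind (c i)) hmH' (hHprob κH' (hCH hH'))
    have hk : dTV (((S k).bind (c i)).bind κH) (((S k).bind (c i)).bind κH') ≤ ε' := by
      have := (dTV_le_dTVInf _ _ (finProdFinEquiv (k, i))).trans hHd
      simpa only [T, Equiv.symm_apply_apply] using this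
    simp only
    rw [← Measure.bind_bind (hFmeas κF hF).aemeasurable hmH.aemeasurable,
      ← Measure.bind_bind (hFmeas _ (hcF i)).aemeasurable hmH'.aemeasurable]
    exact (dTV_triangle _ (((S k).bind (c i)).bind κH) _).trans
      (add_le_add (dTV_bind_le _ _ hmH (hHprob κH hH)) hk)
  · refine (Set.encard_image_le _ _).trans ?_
    rw [Set.encard_prod]
    exact mul_le_mul' hCcard' hCcard

/-- Composing classes of Markov kernels with bounded TV covering
numbers: for every `ε, ε' > 0` and `m`, with `𝓗∘𝓕 = {x ↦ (κF x).bind κH}`,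
(i) `N_U(ε+ε', 𝓗∘𝓕, m, d_TV^∞, X̄_d) ≤ N_U(ε', 𝓗, m·N₁, d_TV^∞, X̄_p) · N₁`;
(ii) the analogue over Dirac inputs with `N₂`;
(iii) the `ℓ2` analogue over Dirac inputs with `N₃`. -/
theorem tv_cover_composition (d p q : ℕ) (ε ε' : ℝ) (hε : 0 < ε) (hε' : 0 < ε') (m : ℕ)
    (F : Set ((Fin d → ℝ) → Measure (Fin p → ℝ)))
    (H : Set ((Fin p → ℝ) → Measure (Fin q → ℝ)))
    (hFmeas : ∀ κ ∈ F, Measurable κ)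
    (hFprob : ∀ κ ∈ F, ∀ x, IsProbabilityMeasure (κ x))
    (hHmeas : ∀ κ ∈ H, Measurable κ)
    (hHprob : ∀ κ ∈ H, ∀ y, IsProbabilityMeasure (κ y)) :
    (∀ N1 : ℕ, kCoverNum F m (probMeasures d) (dTVInf m) ε = (N1 : ℕ∞) →
      kCoverNum {κ | ∃ κF ∈ F, ∃ κH ∈ H, κ = fun x => (κF x).bind κH} m
          (probMeasures d) (dTVInf m) (ε + ε')
        ≤ kCoverNum H (m * N1) (probMeasures p) (dTVInf (m * N1)) ε' * N1) ∧
    (∀ N2 : ℕ, kCoverNum F m (diracMeasures d) (dTVInf m) ε = (N2 : ℕ∞) →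
      kCoverNum {κ | ∃ κF ∈ F, ∃ κH ∈ H, κ = fun x => (κF x).bind κH} m
          (diracMeasures d) (dTVInf m) (ε + ε')
        ≤ kCoverNum H (m * N2) (probMeasures p) (dTVInf (m * N2)) ε' * N2) ∧
    (∀ N3 : ℕ, kCoverNum F m (diracMeasures d) (dTVL2 m) ε = (N3 : ℕ∞) →
      kCoverNum {κ | ∃ κF ∈ F, ∃ κH ∈ H, κ = fun x => (κF x).bind κH} m
          (diracMeasures d) (dTVL2 m) (ε + ε')
        ≤ kCoverNum H (m * N3) (probMeasures p) (dTVInf (m * N3)) ε' * N3) := by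
  have hdirac : ∀ μ ∈ diracMeasures d, IsProbabilityMeasure μ := by
    rintro _ ⟨x, rfl⟩
    infer_instance
  have hInf : ∀ u : Fin m → Measure (Fin p → ℝ), dTVInf m u u ≤ ε := fun u =>
    Real.iSup_le (fun k => (dTV_self _).le.trans hε.le) hε.le
  have hL2 : ∀ u : Fin m → Measure (Fin p → ℝ), dTVL2 m u u ≤ ε := fun u => by
    simpa [dTVL2, dTV_self] using hε.le
  exact ⟨kCoverNum_comp_le hε' hFmeas hFprob hHmeas hHprob (fun _ h => h) _ _ hInf
      (dTVInf_le_add hε hε'),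
    kCoverNum_comp_le hε' hFmeas hFprob hHmeas hHprob hdirac _ _ hInf (dTVInf_le_add hε hε'),
    kCoverNum_comp_le hε' hFmeas hFprob hHmeas hHprob hdirac _ _ hL2 (dTVL2_le_add hε hε')⟩
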